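/- Let H : ℝ × (ℝ^d × ℝ^d) → ℝ be a smooth Hamiltonian, 1-periodic in time, with a smooth flow φ satisfying the cocycle identity φ(t+1,z) = φ(t,φ(1,z)), and let ψ = φ(1,·). Let x₀ and y₀ be fixed points of ψ whose 1-periodic orbits x(t) = φ(t,x₀), y(t) = φ(t,y₀), t ∈ [0,1], satisfy c := 𝒜_H(y) − 𝒜_H(x) > 0, and let σ : [0,1] → ℝ^d × ℝ^d be a C¹ curve with σ(0) = x₀ and σ(1) = y₀. Assume in addition that there is R > 0 such that ‖p(ψⁿ(σ(t)))‖ ≤ R for all n ≥ 0 and all t ∈ [0,1], where p denotes the second component. Then there exist a > 0 and b ≥ 0 such that for every n ≥ 1 the length of ψⁿ∘σ satisfies ∫₀¹ ‖(ψⁿ∘σ)'(t)‖ dt ≥ a·n − b. -/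

import Mathlib

open intervalIntegral

/-- The Liouville line integral `I(c) = ∫₀¹ ⟨p(t), q'(t)⟩ dt` of a curve
`c(t) = (q(t), p(t))` in `ℝ^d × ℝ^d`. -/
noncomputable def liouvilleIntegral (d : ℕ)
    (c : ℝ → EuclideanSpace ℝ (Fin d) × EuclideanSpace ℝ (Fin d)) : ℝ :=
  ∫ t in (0:ℝ)..1, @inner ℝ _ _ ((c t).2) (deriv (fun s => (c s).1) t)

/-- The Hamiltonian vector field `X_H(t,(q,p)) = (∂_p H(t,q,p), −∂_q H(t,q,p))`. -/
noncomputable def hamVectorField (d : ℕ)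
    (H : ℝ × (EuclideanSpace ℝ (Fin d) × EuclideanSpace ℝ (Fin d)) → ℝ) (t : ℝ)
    (z : EuclideanSpace ℝ (Fin d) × EuclideanSpace ℝ (Fin d)) :
    EuclideanSpace ℝ (Fin d) × EuclideanSpace ℝ (Fin d) :=
  (gradient (fun p => H (t, (z.1, p))) z.2, - gradient (fun q => H (t, (q, z.2))) z.1)

/-- The symplectic action `𝒜_H(γ) = I(γ) − ∫₀¹ H(t,γ(t)) dt` of a curve `γ`. -/
noncomputable def symplecticAction (d : ℕ)
    (H : ℝ × (EuclideanSpace ℝ (Fin d) × EuclideanSpace ℝ (Fin d)) → ℝ)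
    (γ : ℝ → EuclideanSpace ℝ (Fin d) × EuclideanSpace ℝ (Fin d)) : ℝ :=
  liouvilleIntegral d γ - ∫ t in (0:ℝ)..1, H (t, γ t)

/-!
Let `θ` be the Liouville form `p · dq`, `ω = -dθ`, and `X` the velocity of the flow. Hamilton's
equation `ι_X ω = dH` and Cartan's formula give `∂ₜ(φₜ^* θ) = d((θ(X) - H) ∘ φₜ)`, so applying the
time-one map to a curve from `x₀` to `y₀` changes its Liouville integral by the action of the orbit
of `y₀` minus that of `x₀`. When both points are fixed, the Liouville integral of the `n`-th iterate
therefore grows linearly in `n`, while it is at most the supremum of `‖θ‖` along the curve times the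
length of the curve.
-/

open Set MeasureTheory

section Calculus

variable {V F : Type*} [NormedAddCommGroup V] [NormedSpace ℝ V]
  [NormedAddCommGroup F] [NormedSpace ℝ F]

lemma hasDerivAt_partial_fst {f : ℝ × V → F} {t : ℝ} {z : V} (hf : DifferentiableAt ℝ f (t, z)) :
    HasDerivAt (fun s => f (s, z)) (fderiv ℝ f (t, z) (1, 0)) t :=
  hf.hasFDerivAt.comp_hasDerivAt t ((hasDerivAt_id t).prodMk (hasDerivAt_const t z))

lemma hasFDerivAt_partial_snd {f : ℝ × V → F} {t : ℝ} {z : V}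
    (hf : DifferentiableAt ℝ f (t, z)) :
    HasFDerivAt (fun z' => f (t, z')) ((fderiv ℝ f (t, z)).comp (.inr ℝ ℝ V)) z :=
  hf.hasFDerivAt.comp z (hasFDerivAt_prodMk_right t z)

lemma hasDerivAt_comp_curve_snd {f : ℝ × V → F} {c : ℝ → V} {t s : ℝ}
    (hf : DifferentiableAt ℝ f (t, c s)) (hc : DifferentiableAt ℝ c s) :
    HasDerivAt (fun s => f (t, c s)) (fderiv ℝ f (t, c s) (0, deriv c s)) s :=
  (hasFDerivAt_partial_snd hf).comp_hasDerivAt s hc.hasDerivAt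

lemma contDiff_iterate {n : WithTop ℕ∞} {ψ : V → V} (hψ : ContDiff ℝ n ψ) (k : ℕ) :
    ContDiff ℝ n ψ^[k] := by
  induction k with
  | zero => exact contDiff_id
  | succ k ih => exact ih.comp hψ

lemma integral_sub_eq_integral_sub_of_hasDerivAt [CompleteSpace F] {P L G : ℝ → ℝ → F}
    (hP : ∀ t s, HasDerivAt (fun t => P t s) (G t s) t)
    (hL : ∀ t s, HasDerivAt (fun s => L t s) (G t s) s)
    (hG : Continuous (Function.uncurry G)) (t₀ t₁ a b : ℝ) :
    ∫ s in a..b, (P t₁ s - P t₀ s) = ∫ t in t₀..t₁, (L t b - L t a) := by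
  have hG_int : IntegrableOn (Function.uncurry G) (uIoc t₀ t₁ ×ˢ uIoc a b) :=
    (hG.continuousOn.integrableOn_compact (isCompact_uIcc.prod isCompact_uIcc)).mono_set
      (prod_mono uIoc_subset_uIcc uIoc_subset_uIcc)
  calc ∫ s in a..b, (P t₁ s - P t₀ s)
      = ∫ s in a..b, ∫ t in t₀..t₁, G t s := by
        refine intervalIntegral.integral_congr fun s _ => ?_
        exact (integral_eq_sub_of_hasDerivAt (fun t _ => hP t s)
          ((hG.uncurry_right s).intervalIntegrable _ _)).symm
    _ = ∫ t in t₀..t₁, ∫ s in a..b, G t s :=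
        (intervalIntegral_intervalIntegral_swap hG_int).symm
    _ = ∫ t in t₀..t₁, (L t b - L t a) := by
        refine intervalIntegral.integral_congr fun t _ => ?_
        exact integral_eq_sub_of_hasDerivAt (fun s _ => hL t s)
          ((hG.uncurry_left t).intervalIntegrable _ _)

end Calculus

section ExactSymplectic

variable {V : Type*} [NormedAddCommGroup V] [NormedSpace ℝ V]

/-- The integral `∫_a^b θ_{c(t)}(c'(t)) dt` of a `1`-form `θ` along a curve `c`. -/
noncomputable def lineIntegral (θ : V → V →L[ℝ] ℝ) (c : ℝ → V) (a b : ℝ) : ℝ :=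
  ∫ t in a..b, θ (c t) (deriv c t)

/-- The Hamiltonian action `∫_γ θ - ∫_a^b H(t, γ(t)) dt` of a curve `γ` with respect to a primitive
`θ` of minus the symplectic form. -/
noncomputable def hamiltonianAction (θ : V → V →L[ℝ] ℝ) (H : ℝ × V → ℝ) (γ : ℝ → V)
    (a b : ℝ) : ℝ :=
  lineIntegral θ γ a b - ∫ t in a..b, H (t, γ t)

/-- The map `φ` is a flow of the time-dependent Hamiltonian `H` for the closed `2`-form `ω = -dθ`:
it is the identity at time `0`, and its velocity `X` satisfies `ι_X ω = dH`, where
`dθ(v, w) = Dθ(v)(w) - Dθ(w)(v)`. -/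
structure IsHamiltonianFlow (θ : V → V →L[ℝ] ℝ) (H : ℝ × V → ℝ) (φ : ℝ × V → V) : Prop where
  map_zero : ∀ z, φ (0, z) = z
  fderiv_hamiltonian : ∀ t z w, fderiv ℝ (fun z' => H (t, z')) (φ (t, z)) w =
    fderiv ℝ θ (φ (t, z)) w (deriv (fun s => φ (s, z)) t) -
      fderiv ℝ θ (φ (t, z)) (deriv (fun s => φ (s, z)) t) w

/-- The function `θ(X) - H` evaluated along the flow `φ` with velocity `X`, as a function of time
and initial point; its time integral is the action of the orbit. -/
noncomputable def flowLagrangian (θ : V → V →L[ℝ] ℝ) (H : ℝ × V → ℝ) (φ : ℝ × V → V)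
    (x : ℝ × V) : ℝ :=
  θ (φ x) (fderiv ℝ φ x (1, 0)) - H (x.1, φ x)

variable {θ : V → V →L[ℝ] ℝ} {H : ℝ × V → ℝ} {φ : ℝ × V → V}

lemma lineIntegral_comp_curve_snd (hφ : Differentiable ℝ φ) {c : ℝ → V} (hc : Differentiable ℝ c)
    (t a b : ℝ) :
    lineIntegral θ (fun s => φ (t, c s)) a b =
      ∫ s in a..b, θ (φ (t, c s)) (fderiv ℝ φ (t, c s) (0, deriv c s)) := by
  simp only [lineIntegral, (hasDerivAt_comp_curve_snd (hφ _) (hc _)).deriv]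

lemma lineIntegral_le_mul_length {c : ℝ → V} {a b R : ℝ} (hc : ContDiff ℝ 1 c) (hab : a ≤ b)
    (hR : ∀ t ∈ Icc a b, ‖θ (c t)‖ ≤ R) :
    lineIntegral θ c a b ≤ R * ∫ t in a..b, ‖deriv c t‖ := by
  have hc' := hc.continuous_deriv_one
  rw [← intervalIntegral.integral_const_mul]
  refine (Real.le_norm_self _).trans (intervalIntegral.norm_integral_le_of_norm_le hab
    (.of_forall fun t ht => ?_) ((hc'.norm.const_mul R).intervalIntegrable _ _))
  exact (θ (c t)).le_of_opNorm_le (hR t (Ioc_subset_Icc_self ht)) _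

lemma hamiltonianAction_flow_eq_integral_flowLagrangian (hθ : Continuous θ) (hH : Continuous H)
    (hφ : ContDiff ℝ 1 φ) (z : V) (a b : ℝ) :
    hamiltonianAction θ H (fun t => φ (t, z)) a b = ∫ t in a..b, flowLagrangian θ H φ (t, z) := by
  have := hφ.continuous
  have := hφ.continuous_fderiv one_ne_zero
  have hvelocity (t : ℝ) : deriv (fun s => φ (s, z)) t = fderiv ℝ φ (t, z) (1, 0) :=
    (hasDerivAt_partial_fst (hφ.differentiable one_ne_zero _)).deriv
  simp only [hamiltonianAction, lineIntegral, hvelocity, flowLagrangian]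
  rw [intervalIntegral.integral_sub] <;> exact Continuous.intervalIntegrable (by fun_prop) _ _

lemma contDiff_flowLagrangian (hθ : ContDiff ℝ 1 θ) (hH : ContDiff ℝ 1 H) (hφ : ContDiff ℝ 2 φ) :
    ContDiff ℝ 1 (flowLagrangian θ H φ) := by
  have hφ_one : ContDiff ℝ 1 φ := hφ.of_le one_le_two
  have hφ_fderiv : ContDiff ℝ 1 (fderiv ℝ φ) := hφ.fderiv_right one_add_one_eq_two.le
  exact ((hθ.comp hφ_one).clm_apply (hφ_fderiv.clm_apply contDiff_const)).sub
    (hH.comp (contDiff_fst.prodMk hφ_one))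

lemma fderiv_flowLagrangian_apply (hθ : ContDiff ℝ 1 θ) (hH : ContDiff ℝ 1 H)
    (hφ : ContDiff ℝ 2 φ) (t : ℝ) (z v : V) :
    fderiv ℝ (flowLagrangian θ H φ) (t, z) (0, v) =
      θ (φ (t, z)) (fderiv ℝ (fderiv ℝ φ) (t, z) (0, v) (1, 0)) +
        fderiv ℝ θ (φ (t, z)) (fderiv ℝ φ (t, z) (0, v)) (fderiv ℝ φ (t, z) (1, 0)) -
        fderiv ℝ (fun z' => H (t, z')) (φ (t, z)) (fderiv ℝ φ (t, z) (0, v)) := by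
  have hφ' := (hφ.differentiable two_ne_zero (t, z)).hasFDerivAt
  have hφ'' := ((hφ.fderiv_right one_add_one_eq_two.le).differentiable one_ne_zero
    (t, z)).hasFDerivAt
  have hθ' := (hθ.differentiable one_ne_zero (φ (t, z))).hasFDerivAt
  have hH' := hH.differentiable one_ne_zero (t, φ (t, z))
  have hL : HasFDerivAt (flowLagrangian θ H φ) _ (t, z) :=
    ((hθ'.comp (t, z) hφ').clm_apply (hφ''.clm_apply (hasFDerivAt_const (1, 0) _))).sub
      (hH'.hasFDerivAt.comp (t, z) (hasFDerivAt_fst.prodMk hφ'))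
  simp [hL.fderiv, (hasFDerivAt_partial_snd hH').fderiv]

namespace IsHamiltonianFlow

lemma hasDerivAt_pullback (hflow : IsHamiltonianFlow θ H φ) (hθ : ContDiff ℝ 1 θ)
    (hH : ContDiff ℝ 1 H) (hφ : ContDiff ℝ 2 φ) (t : ℝ) (z v : V) :
    HasDerivAt (fun t => θ (φ (t, z)) (fderiv ℝ φ (t, z) (0, v)))
      (fderiv ℝ (flowLagrangian θ H φ) (t, z) (0, v)) t := by
  have hvelocity : HasDerivAt (fun s => φ (s, z)) (fderiv ℝ φ (t, z) (1, 0)) t :=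
    hasDerivAt_partial_fst (hφ.differentiable two_ne_zero _)
  have hvariation : HasDerivAt (fun s => fderiv ℝ φ (s, z) (0, v))
      (fderiv ℝ (fderiv ℝ φ) (t, z) (1, 0) (0, v)) t := by
    have hφ'' := hasDerivAt_partial_fst
      ((hφ.fderiv_right one_add_one_eq_two.le).differentiable one_ne_zero (t, z))
    simpa using hφ''.clm_apply (hasDerivAt_const t ((0 : ℝ), v))
  have hsymm : fderiv ℝ (fderiv ℝ φ) (t, z) (1, 0) (0, v) =
      fderiv ℝ (fderiv ℝ φ) (t, z) (0, v) (1, 0) :=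
    (hφ.contDiffAt.isSymmSndFDerivAt (by simp)).eq _ _
  refine (((hθ.differentiable one_ne_zero _).hasFDerivAt.comp_hasDerivAt t
    hvelocity).clm_apply hvariation).congr_deriv ?_
  rw [fderiv_flowLagrangian_apply hθ hH hφ, hflow.fderiv_hamiltonian, hvelocity.deriv, hsymm]
  simp only [Function.comp_apply]
  ring

lemma lineIntegral_comp_sub_lineIntegral (hflow : IsHamiltonianFlow θ H φ) (hθ : ContDiff ℝ 1 θ)
    (hH : ContDiff ℝ 1 H) (hφ : ContDiff ℝ 2 φ) {c : ℝ → V} (hc : ContDiff ℝ 1 c) (T a b : ℝ) :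
    lineIntegral θ (fun s => φ (T, c s)) a b - lineIntegral θ c a b =
      hamiltonianAction θ H (fun t => φ (t, c b)) 0 T -
        hamiltonianAction θ H (fun t => φ (t, c a)) 0 T := by
  have hL := contDiff_flowLagrangian hθ hH hφ
  have := hL.continuous
  have := hL.continuous_fderiv one_ne_zero
  have := hθ.continuous
  have := hφ.continuous
  have := hφ.continuous_fderiv two_ne_zero
  have := hc.continuous
  have := hc.continuous_deriv_one
  have hstart : lineIntegral θ c a b = lineIntegral θ (fun s => φ (0, c s)) a b := by
    simp only [hflow.map_zero]
  have hstokes := integral_sub_eq_integral_sub_of_hasDerivAt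
    (fun t s => hflow.hasDerivAt_pullback hθ hH hφ t (c s) (deriv c s))
    (fun t s => hasDerivAt_comp_curve_snd (hL.differentiable one_ne_zero (t, c s))
      (hc.differentiable one_ne_zero s))
    (by unfold Function.uncurry; fun_prop) 0 T a b
  simp only [hstart, lineIntegral_comp_curve_snd (hφ.differentiable two_ne_zero)
    (hc.differentiable one_ne_zero), hamiltonianAction_flow_eq_integral_flowLagrangian hθ.continuous
    hH.continuous (hφ.of_le one_le_two)]
  rwa [intervalIntegral.integral_sub, intervalIntegral.integral_sub] at hstokes
  all_goals exact Continuous.intervalIntegrable (by fun_prop) _ _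

lemma lineIntegral_iterate (hflow : IsHamiltonianFlow θ H φ) (hθ : ContDiff ℝ 1 θ)
    (hH : ContDiff ℝ 1 H) (hφ : ContDiff ℝ 2 φ) {c : ℝ → V} (hc : ContDiff ℝ 1 c) {T a b : ℝ}
    (ha : φ (T, c a) = c a) (hb : φ (T, c b) = c b) (n : ℕ) :
    lineIntegral θ ((fun z => φ (T, z))^[n] ∘ c) a b = lineIntegral θ c a b +
      n * (hamiltonianAction θ H (fun t => φ (t, c b)) 0 T -
        hamiltonianAction θ H (fun t => φ (t, c a)) 0 T) := by
  induction n with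
  | zero => simp
  | succ n ih =>
    have hψ : ContDiff ℝ 1 fun z => φ (T, z) :=
      (hφ.of_le one_le_two).comp (contDiff_const.prodMk contDiff_id)
    have hstep := hflow.lineIntegral_comp_sub_lineIntegral hθ hH hφ
      ((contDiff_iterate hψ n).comp hc) T a b
    have hfixed {z : V} (hz : φ (T, z) = z) : (fun z => φ (T, z))^[n] z = z :=
      Function.iterate_fixed hz n
    rw [Function.comp_apply, Function.comp_apply, hfixed ha, hfixed hb, ih] at hstep
    rw [Function.iterate_succ', Function.comp_assoc]
    refine (sub_eq_iff_eq_add.mp hstep).trans ?_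
    push_cast
    ring

end IsHamiltonianFlow

theorem stmt_7_general (hθ : ContDiff ℝ 1 θ) (hH : ContDiff ℝ 1 H) (hφ : ContDiff ℝ 2 φ)
    (hflow : IsHamiltonianFlow θ H φ) {x₀ y₀ : V} (hx₀ : φ (1, x₀) = x₀) (hy₀ : φ (1, y₀) = y₀)
    (hgap : 0 < hamiltonianAction θ H (fun t => φ (t, y₀)) 0 1 -
      hamiltonianAction θ H (fun t => φ (t, x₀)) 0 1)
    {σ : ℝ → V} (hσ : ContDiff ℝ 1 σ) (hσ0 : σ 0 = x₀) (hσ1 : σ 1 = y₀) {R : ℝ} (hR : 0 < R)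
    (hbound : ∀ n : ℕ, ∀ t ∈ Icc (0 : ℝ) 1, ‖θ ((fun z => φ (1, z))^[n] (σ t))‖ ≤ R) :
    ∃ a > (0 : ℝ), ∃ b ≥ (0 : ℝ), ∀ n : ℕ,
      a * n - b ≤ ∫ t in (0 : ℝ)..1, ‖deriv ((fun z => φ (1, z))^[n] ∘ σ) t‖ := by
  subst hσ0 hσ1
  refine ⟨_, div_pos hgap hR, |lineIntegral θ σ 0 1| / R, by positivity, fun n => ?_⟩
  have hψ : ContDiff ℝ 1 fun z => φ (1, z) :=
    (hφ.of_le one_le_two).comp (contDiff_const.prodMk contDiff_id)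
  have hlength := lineIntegral_le_mul_length (c := (fun z => φ (1, z))^[n] ∘ σ)
    ((contDiff_iterate hψ n).comp hσ) zero_le_one (hbound n)
  rw [hflow.lineIntegral_iterate hθ hH hφ hσ hx₀ hy₀] at hlength
  rw [div_mul_eq_mul_div, ← sub_div, div_le_iff₀ hR]
  linarith [neg_abs_le (lineIntegral θ σ 0 1)]

end ExactSymplectic

section Liouville

variable {E : Type*} [NormedAddCommGroup E] [InnerProductSpace ℝ E]

variable (E) in
/-- The Liouville form `p · dq` on `E × E`, as a continuous linear map from points `(q, p)` to
covectors. -/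
noncomputable def liouvilleForm : E × E →L[ℝ] E × E →L[ℝ] ℝ :=
  (innerSL ℝ : E →L[ℝ] E →L[ℝ] ℝ).bilinearComp (.snd ℝ E E) (.fst ℝ E E)

lemma liouvilleForm_apply (z w : E × E) : liouvilleForm E z w = inner ℝ z.2 w.1 := rfl

-- The norm on `E × E` is the maximum of the norms of the factors. It is at most the Euclidean norm,
-- so a lower bound on lengths measured with it also bounds Euclidean lengths.
lemma norm_liouvilleForm_apply_le (z : E × E) : ‖liouvilleForm E z‖ ≤ ‖z.2‖ :=
  (liouvilleForm E z).opNorm_le_bound (norm_nonneg _) fun w =>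
    (norm_inner_le_norm z.2 w.1).trans (by gcongr; exact norm_fst_le w)

variable {d : ℕ}

local notation "𝔼" => EuclideanSpace ℝ (Fin d)

lemma lineIntegral_liouvilleForm {c : ℝ → 𝔼 × 𝔼} (hc : Differentiable ℝ c) :
    lineIntegral (liouvilleForm 𝔼) c 0 1 = liouvilleIntegral d c := by
  have hfst (t : ℝ) : deriv (fun s => (c s).1) t = (deriv c t).1 :=
    ((hc t).hasFDerivAt.fst.hasDerivAt).deriv.trans (by simp)
  simp only [lineIntegral, liouvilleIntegral, liouvilleForm_apply, hfst]

lemma hamiltonianAction_liouvilleForm {H : ℝ × (𝔼 × 𝔼) → ℝ} {γ : ℝ → 𝔼 × 𝔼}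
    (hγ : Differentiable ℝ γ) :
    hamiltonianAction (liouvilleForm 𝔼) H γ 0 1 = symplecticAction d H γ := by
  rw [hamiltonianAction, lineIntegral_liouvilleForm hγ, symplecticAction]

lemma fderiv_eq_liouvilleForm_hamVectorField {H : ℝ × (𝔼 × 𝔼) → ℝ} {t : ℝ} {z : 𝔼 × 𝔼}
    (hH : DifferentiableAt ℝ H (t, z)) (w : 𝔼 × 𝔼) :
    fderiv ℝ (fun z' => H (t, z')) z w =
      liouvilleForm 𝔼 w (hamVectorField d H t z) - liouvilleForm 𝔼 (hamVectorField d H t z) w := by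
  have hHt := (hasFDerivAt_partial_snd hH).differentiableAt.hasFDerivAt
  have hq : HasFDerivAt (fun q => H (t, (q, z.2))) _ z.1 :=
    HasFDerivAt.comp z.1 (g := fun z' => H (t, z')) hHt (hasFDerivAt_prodMk_left z.1 z.2)
  have hp : HasFDerivAt (fun p => H (t, (z.1, p))) _ z.2 :=
    HasFDerivAt.comp z.2 (g := fun z' => H (t, z')) hHt (hasFDerivAt_prodMk_right z.1 z.2)
  rw [liouvilleForm_apply, liouvilleForm_apply, hamVectorField, inner_gradient_right,
    inner_neg_left, inner_gradient_left, hq.fderiv, hp.fderiv]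
  simp [← map_add]

lemma isHamiltonianFlow_liouvilleForm {H : ℝ × (𝔼 × 𝔼) → ℝ} {φ : ℝ × (𝔼 × 𝔼) → 𝔼 × 𝔼}
    (hH : Differentiable ℝ H) (hφ0 : ∀ z, φ (0, z) = z)
    (hφflow : ∀ t z, deriv (fun s => φ (s, z)) t = hamVectorField d H t (φ (t, z))) :
    IsHamiltonianFlow (liouvilleForm 𝔼) H φ where
  map_zero := hφ0
  fderiv_hamiltonian t z w := by
    rw [(liouvilleForm 𝔼).fderiv, hφflow, fderiv_eq_liouvilleForm_hamVectorField (hH _)]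

end Liouville

/-- Linear growth of the length of `ψⁿ∘σ` when the `p`-components of all the iterated curves
stay bounded by `R`, for `σ` joining two fixed points of the time-1 map `ψ` whose
1-periodic orbits have positive action difference. -/
theorem stmt_7 (d : ℕ)
    (H : ℝ × (EuclideanSpace ℝ (Fin d) × EuclideanSpace ℝ (Fin d)) → ℝ)
    (φ : ℝ × (EuclideanSpace ℝ (Fin d) × EuclideanSpace ℝ (Fin d)) →
      EuclideanSpace ℝ (Fin d) × EuclideanSpace ℝ (Fin d))
    (hH : ContDiff ℝ (⊤ : ℕ∞) H) (hφ : ContDiff ℝ (⊤ : ℕ∞) φ)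
    (hHper : ∀ t z, H (t + 1, z) = H (t, z))
    (hφ0 : ∀ z, φ (0, z) = z)
    (hφflow : ∀ t z, deriv (fun s => φ (s, z)) t = hamVectorField d H t (φ (t, z)))
    (hcocycle : ∀ t z, φ (t + 1, z) = φ (t, φ (1, z)))
    (x₀ y₀ : EuclideanSpace ℝ (Fin d) × EuclideanSpace ℝ (Fin d))
    (hx₀ : φ (1, x₀) = x₀) (hy₀ : φ (1, y₀) = y₀)
    (hgap : 0 < symplecticAction d H (fun t => φ (t, y₀)) -
      symplecticAction d H (fun t => φ (t, x₀)))
    (σ : ℝ → EuclideanSpace ℝ (Fin d) × EuclideanSpace ℝ (Fin d)) (hσ : ContDiff ℝ 1 σ)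
    (hσ0 : σ 0 = x₀) (hσ1 : σ 1 = y₀)
    (R : ℝ) (hR : 0 < R)
    (hbound : ∀ n : ℕ, ∀ t ∈ Set.Icc (0:ℝ) 1, ‖((fun z => φ (1, z))^[n] (σ t)).2‖ ≤ R) :
    ∃ a > (0:ℝ), ∃ b ≥ (0:ℝ), ∀ n : ℕ, 1 ≤ n →
      a * n - b ≤ ∫ t in (0:ℝ)..1, ‖deriv ((fun z => φ (1, z))^[n] ∘ σ) t‖ := by
  have hH_one : ContDiff ℝ 1 H := hH.of_le (mod_cast le_top)
  have hφ_two : ContDiff ℝ 2 φ := hφ.of_le (WithTop.coe_le_coe.2 le_top)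
  have hflow := isHamiltonianFlow_liouvilleForm (hH_one.differentiable one_ne_zero) hφ0 hφflow
  have horbit (z) : Differentiable ℝ fun t => φ (t, z) := fun t =>
    (hasDerivAt_partial_fst (hφ_two.differentiable two_ne_zero (t, z))).differentiableAt
  rw [← hamiltonianAction_liouvilleForm (horbit y₀),
    ← hamiltonianAction_liouvilleForm (horbit x₀)] at hgap
  obtain ⟨a, ha, b, hb, hlength⟩ := stmt_7_general
    (liouvilleForm (EuclideanSpace ℝ (Fin d))).contDiff hH_one hφ_two hflow hx₀ hy₀ hgap hσ hσ0 hσ1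
    hR fun n t ht => (norm_liouvilleForm_apply_le _).trans (hbound n t ht)
  exact ⟨a, ha, b, hb, fun n _ => hlength n⟩
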